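/- Let d be a lower density function and let T be an infinite, strongly positive, d-dense tree. Let E = T ∩ 2^l for some l at least the common length of the strings in ⟨d⟩. Then there exists a lower density function e with domain ⟨e⟩ = E such that e extends d and T is e-dense. -/

import Mathlib

open MeasureTheory

/-- The first `n` bits of `x ∈ 2^ω`, as a string. -/
def seg (x : ℕ → Bool) (n : ℕ) : List Bool := List.ofFn (fun i : Fin n => x i)

/-- The cylinder of a string: all `x ∈ 2^ω` with `σ` as a prefix. -/
def cyl (σ : List Bool) : Set (ℕ → Bool) := {x | seg x σ.length = σ}

/-- A tree: a set of strings closed under prefixes. -/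
def IsTree (T : Set (List Bool)) : Prop :=
  ∀ σ ∈ T, ∀ τ : List Bool, τ <+: σ → τ ∈ T

/-- The paths of a tree: those `x ∈ 2^ω` all of whose prefixes are in `T`. -/
def paths (T : Set (List Bool)) : Set (ℕ → Bool) := {x | ∀ n, seg x n ∈ T}

/-- Relative measure: `μ_τ(A) = 2^{|τ|} · μ(A ∩ ⟦τ⟧)`. -/
noncomputable def relMeasure (μ : Measure (ℕ → Bool)) (τ : List Bool)
    (A : Set (ℕ → Bool)) : ℝ :=
  2 ^ τ.length * (μ (A ∩ cyl τ)).toReal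

/-- A tree is strongly positive if `μ_σ([T]) > 0` for every `σ ∈ T`. -/
def StronglyPositive (μ : Measure (ℕ → Bool)) (T : Set (List Bool)) : Prop :=
  ∀ σ ∈ T, 0 < relMeasure μ σ (paths T)

/-- A lower density function: a nonnegative rational-valued function on a
finite nonempty domain of strings of equal length. -/
structure LDF where
  dom : Finset (List Bool)
  val : List Bool → ℚ
  dom_nonempty : dom.Nonempty
  nonneg : ∀ σ ∈ dom, 0 ≤ val σ
  eq_length : ∀ σ ∈ dom, ∀ τ ∈ dom, σ.length = τ.length

/-- `e` extends `d`: every element of `⟨e⟩` extends an element of `⟨d⟩`,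
every element of `⟨d⟩` has an extension in `⟨e⟩`, and for each `σ ∈ ⟨d⟩`,
`d(σ)·2^{-|σ|} ≤ Σ_{τ ∈ ⟨e⟩, σ ⊑ τ} e(τ)·2^{-|τ|}`. -/
def LDF.Extends (e d : LDF) : Prop :=
  (∀ τ ∈ e.dom, ∃ σ ∈ d.dom, σ <+: τ) ∧
  (∀ σ ∈ d.dom, ∃ τ ∈ e.dom, σ <+: τ) ∧
  ∀ σ ∈ d.dom, d.val σ * (2 : ℚ)⁻¹ ^ σ.length ≤
    ∑ τ ∈ e.dom.filter (fun τ => σ <+: τ), e.val τ * (2 : ℚ)⁻¹ ^ τ.length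

/-- A tree `T` is `d`-dense: `⟨d⟩` is the full level of `T` at the common
length of `⟨d⟩`, and for some rational `ε > 0`, `d(σ) + ε ≤ μ_σ([T])` for
each `σ ∈ ⟨d⟩`. -/
def LDF.DenseIn (d : LDF) (μ : Measure (ℕ → Bool)) (T : Set (List Bool)) : Prop :=
  ∃ ε : ℚ, 0 < ε ∧ (∃ l : ℕ, ∀ σ : List Bool, σ ∈ d.dom ↔ (σ ∈ T ∧ σ.length = l)) ∧
    ∀ σ ∈ d.dom, (d.val σ : ℝ) + (ε : ℝ) ≤ relMeasure μ σ (paths T)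

theorem seg_prefix_aux (x : ℕ → Bool) (m n : ℕ) (h : m ≤ n) : seg x m <+: seg x n := by
  rw [List.prefix_iff_eq_take]
  apply List.ext_getElem
  · simp [seg, h]
  · intro i h1 h2
    simp [seg]

/-- **Extension of lower density functions to deeper levels.**
Let `d` be a lower density function and `T` an infinite, strongly positive,
`d`-dense tree.  Let `E = T ∩ 2^l` for some `l` at least the common length
of `⟨d⟩`.  Then there is a lower density function `e` with domain `E`
extending `d` such that `T` is `e`-dense.
(`μ` is the fair-coin measure, characterized by its values on cylinders.) -/
theorem ldf_extension (μ : Measure (ℕ → Bool))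
    (hμ : ∀ σ : List Bool, μ (cyl σ) = (2 : ENNReal)⁻¹ ^ σ.length)
    (d : LDF) (T : Set (List Bool)) (hT : IsTree T) (hinf : T.Infinite)
    (hsp : StronglyPositive μ T) (hdense : d.DenseIn μ T)
    (l : ℕ) (hl : ∀ σ ∈ d.dom, σ.length ≤ l)
    (E : Finset (List Bool)) (hE : ∀ σ : List Bool, σ ∈ E ↔ (σ ∈ T ∧ σ.length = l)) :
    ∃ e : LDF, e.dom = E ∧ e.Extends d ∧ e.DenseIn μ T := by
  classical
  obtain ⟨ε, hε, ⟨l0, hl0⟩, hd⟩ := hdense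
  have hεR : (0 : ℝ) < ε := by exact_mod_cast hε
  have seglen : ∀ x n, (seg x n).length = n := by intro x n; simp [seg]
  obtain ⟨σ0, hσ0⟩ := d.dom_nonempty
  have hl0l : l0 ≤ l := by
    have := hl σ0 hσ0
    rwa [((hl0 σ0).1 hσ0).2] at this
  have hfin : ∀ σ, μ (paths T ∩ cyl σ) ≠ ⊤ := by
    intro σ
    refine ne_top_of_le_ne_top ?_ (measure_mono Set.inter_subset_right)
    rw [hμ]
    exact ENNReal.pow_ne_top (by simp)
  have hle1 : ∀ σ, relMeasure μ σ (paths T) ≤ 1 := by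
    intro σ
    have h1 : (μ (paths T ∩ cyl σ)).toReal ≤ (2 : ℝ)⁻¹ ^ σ.length := by
      have : μ (paths T ∩ cyl σ) ≤ (2 : ENNReal)⁻¹ ^ σ.length :=
        (measure_mono Set.inter_subset_right).trans (hμ σ).le
      have h2 := ENNReal.toReal_mono (ENNReal.pow_ne_top (by simp)) this
      simpa using h2
    unfold relMeasure
    calc (2 : ℝ) ^ σ.length * (μ (paths T ∩ cyl σ)).toReal
        ≤ 2 ^ σ.length * (2 : ℝ)⁻¹ ^ σ.length := by gcongr
      _ = 1 := by rw [← mul_pow]; simp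
  have hrel : ∀ σ, relMeasure μ σ (paths T) * (2 : ℝ)⁻¹ ^ σ.length
      = (μ (paths T ∩ cyl σ)).toReal := by
    intro σ
    unfold relMeasure
    rw [mul_right_comm, ← mul_pow]
    simp
  have hsegE : ∀ x ∈ paths T, seg x l ∈ E := fun x hx => (hE _).2 ⟨hx l, seglen x l⟩
  have hpre : ∀ σ ∈ d.dom, ∀ x ∈ cyl σ, σ <+: seg x l := by
    intro σ hσ x hx
    have h := seg_prefix_aux x σ.length l (hl σ hσ)
    have hx' : seg x σ.length = σ := hx
    rwa [hx'] at h
  have hext : ∀ σ ∈ d.dom, ∃ τ ∈ E, σ <+: τ := by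
    intro σ hσ
    have hpos := hsp σ ((hl0 σ).1 hσ).1
    have hne : (paths T ∩ cyl σ).Nonempty := by
      rw [Set.nonempty_iff_ne_empty]
      intro h0
      simp [relMeasure, h0] at hpos
    obtain ⟨x, hx1, hx2⟩ := hne
    exact ⟨seg x l, hsegE x hx1, hpre σ hσ x hx2⟩
  have hq : ∀ τ, ∃ q : ℚ, τ ∈ E → 0 ≤ q ∧ (1 - (ε : ℝ)) * relMeasure μ τ (paths T) ≤ q ∧
      (q : ℝ) < relMeasure μ τ (paths T) := by
    intro τ
    by_cases hτ : τ ∈ E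
    · have hpos := hsp τ ((hE τ).1 hτ).1
      obtain ⟨q, hq1, hq2⟩ := exists_rat_btwn
        (show max 0 ((1 - (ε : ℝ)) * relMeasure μ τ (paths T)) < relMeasure μ τ (paths T) from
          max_lt hpos (by nlinarith))
      refine ⟨q, fun _ => ⟨?_, ((le_max_right _ _).trans_lt hq1).le, hq2⟩⟩
      exact_mod_cast ((le_max_left _ _).trans_lt hq1).le
    · exact ⟨0, fun h => absurd h hτ⟩
  choose v hv using hq
  have hEne : E.Nonempty := by
    obtain ⟨τ, hτ, _⟩ := hext σ0 hσ0
    exact ⟨τ, hτ⟩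
  refine ⟨⟨E, v, hEne, fun τ hτ => (hv τ hτ).1, fun σ hσ τ hτ => by
    rw [((hE σ).1 hσ).2, ((hE τ).1 hτ).2]⟩, rfl, ⟨?_, hext, ?_⟩, ?_⟩
  · intro τ hτ
    obtain ⟨h1, h2⟩ := (hE τ).1 hτ
    refine ⟨τ.take l0, (hl0 _).2 ⟨hT τ h1 _ (List.take_prefix _ _), ?_⟩, List.take_prefix _ _⟩
    rw [List.length_take, h2]
    exact min_eq_left hl0l
  · intro σ hσ
    have hsum : (μ (paths T ∩ cyl σ)).toReal ≤
        ∑ τ ∈ E.filter (fun τ => σ <+: τ), (μ (paths T ∩ cyl τ)).toReal := by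
      rw [← ENNReal.toReal_sum (fun τ _ => hfin τ)]
      refine ENNReal.toReal_mono (ENNReal.sum_ne_top.2 fun τ _ => hfin τ) ?_
      refine le_trans (measure_mono ?_) (measure_biUnion_finset_le _ _)
      rintro x ⟨hx1, hx2⟩
      refine Set.mem_iUnion₂.2 ⟨seg x l, Finset.mem_filter.2 ⟨hsegE x hx1, hpre σ hσ x hx2⟩, hx1, ?_⟩
      change seg x (seg x l).length = seg x l
      rw [seglen]
    have key : (d.val σ : ℝ) * (2 : ℝ)⁻¹ ^ σ.length ≤
        ∑ τ ∈ E.filter (fun τ => σ <+: τ), (v τ : ℝ) * (2 : ℝ)⁻¹ ^ τ.length := by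
      by_cases hε1 : (ε : ℝ) ≤ 1
      · calc (d.val σ : ℝ) * (2 : ℝ)⁻¹ ^ σ.length
            ≤ ((1 - ε) * relMeasure μ σ (paths T)) * (2 : ℝ)⁻¹ ^ σ.length := by
              gcongr
              nlinarith [hd σ hσ, hle1 σ]
          _ = (1 - ε) * (μ (paths T ∩ cyl σ)).toReal := by rw [mul_assoc, hrel]
          _ ≤ (1 - ε) * ∑ τ ∈ E.filter (fun τ => σ <+: τ), (μ (paths T ∩ cyl τ)).toReal :=
              mul_le_mul_of_nonneg_left hsum (by linarith)
          _ = ∑ τ ∈ E.filter (fun τ => σ <+: τ),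
                ((1 - ε) * relMeasure μ τ (paths T)) * (2 : ℝ)⁻¹ ^ τ.length := by
              rw [Finset.mul_sum]
              exact Finset.sum_congr rfl fun τ _ => by rw [mul_assoc, hrel]
          _ ≤ _ := by
              refine Finset.sum_le_sum fun τ hτ => ?_
              exact mul_le_mul_of_nonneg_right (hv τ (Finset.mem_filter.1 hτ).1).2.1 (by positivity)
      · exfalso
        have h0 : (0 : ℝ) ≤ d.val σ := by exact_mod_cast d.nonneg σ hσ
        linarith [hd σ hσ, hle1 σ]
    rw [← Rat.cast_le (K := ℝ)]
    push_cast
    convert key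
  · have hδ : ∃ δ : ℝ, 0 < δ ∧ ∀ τ ∈ E, δ ≤ relMeasure μ τ (paths T) - v τ := by
      obtain ⟨τ, hτ, hmin⟩ := E.exists_min_image (fun τ => relMeasure μ τ (paths T) - v τ) hEne
      exact ⟨_, sub_pos.2 (hv τ hτ).2.2, hmin⟩
    obtain ⟨δ, hδ0, hδ⟩ := hδ
    obtain ⟨q, hq1, hq2⟩ := exists_rat_btwn hδ0
    refine ⟨q, by exact_mod_cast hq1, ⟨l, hE⟩, fun τ hτ => ?_⟩
    have := hδ τ hτ
    change (v τ : ℝ) + q ≤ _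
    linarith
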